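/- Let α ∈ (0,1] and let μ be a (1/α)-entropically independent probability distribution on binom([n],k) with marginals p_i. Let t be an integer with 1 ≤ t ≤ k/2. Then ∑_{S∈binom([n],t)} μ_t(S) · DKL(μ_{t+1|S} ‖ p/k) ≤ (2t/k)·((1/α)·log(2n/k) + 1), where μ_t = μD_{k→t}, DKL(μ_{t+1|S}‖p/k) = ∑_{i∉S} μ_{t+1|S}(i)·log(k·μ_{t+1|S}(i)/p_i), and summands with μ_t(S) = 0 are interpreted as 0. -/

import Mathlib

open Finset

/-! Conditioning `μ` on `S ⊆ T` costs relative entropy `-log P[S ⊆ T]`. Entropic independence turns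
this into a bound on the divergence of the conditional marginals. The elements of `S`, whose
conditional marginal is `1`, contribute nonnegatively and can be discarded; renormalizing the rest
scales the bound by `k / (k - t)` and adds `log (k / (k - t))`. Averaged over `S ∼ μ_t`, the cost
`-log P[S ⊆ T]` is the entropy of `μ_t` minus `log (k.choose t)`, so at most
`log (n.choose t / k.choose t) ≤ t * log (2 * n / k)`. -/

section DiscreteKL

variable {X : Type*} {s t : Finset X} {f g : X → ℝ}

/-- The Kullback–Leibler divergence `DKL(q ‖ p)` of weights on the finite set `s`. Because of
`x / 0 = 0`, a point with `p x = 0 < q x` contributes `0` and not `∞`. -/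
noncomputable def discreteKL (s : Finset X) (q p : X → ℝ) : ℝ :=
  ∑ x ∈ s, q x * Real.log (q x / p x)

theorem discreteKL_const_mul {c : ℝ} (hc : c ≠ 0) (hfg : ∀ x ∈ s, g x = 0 → f x = 0) :
    discreteKL s (fun x => c * f x) g =
      c * discreteKL s f g + c * Real.log c * ∑ x ∈ s, f x := by
  simp only [discreteKL, mul_sum, ← sum_add_distrib]
  refine sum_congr rfl fun x hx => ?_
  by_cases hf : f x = 0
  · simp [hf]
  · rw [mul_div_assoc, Real.log_mul hc (div_ne_zero hf (mt (hfg x hx) hf))]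
    ring

theorem discreteKL_le_of_subset (hst : s ⊆ t) (hg : ∀ x ∈ t, x ∉ s → 0 ≤ g x)
    (hgf : ∀ x ∈ t, x ∉ s → g x ≤ f x) : discreteKL s f g ≤ discreteKL t f g := by
  refine sum_le_sum_of_subset_of_nonneg hst fun x hxt hxs => ?_
  have hgx := hg x hxt hxs
  rcases hgx.eq_or_lt with h0 | hpos
  · simp [← h0]
  · exact mul_nonneg (hgx.trans (hgf x hxt hxs))
      (Real.log_nonneg ((one_le_div hpos).mpr (hgf x hxt hxs)))

theorem sum_negMulLog_le_log_card (hf : ∀ x ∈ s, 0 ≤ f x) (hsum : ∑ x ∈ s, f x = 1) :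
    ∑ x ∈ s, Real.negMulLog (f x) ≤ Real.log #s := by
  have hcard : (0 : ℝ) < #s := by
    refine Nat.cast_pos.mpr (card_pos.mpr (nonempty_of_ne_empty ?_))
    rintro rfl
    simp at hsum
  have hjensen := Real.concaveOn_negMulLog.le_map_sum (t := s) (w := fun _ => (#s : ℝ)⁻¹) (p := f)
    (fun _ _ => by positivity) (by simp [hcard.ne']) hf
  simp only [smul_eq_mul, ← mul_sum, hsum, mul_one, Real.negMulLog, Real.log_inv, neg_mul_neg]
    at hjensen
  exact le_of_mul_le_mul_left hjensen (inv_pos.mpr hcard)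

end DiscreteKL

theorem pow_mul_choose_le_pow_mul_choose (n k t : ℕ) :
    (k + 1 - t) ^ t * n.choose t ≤ n ^ t * k.choose t := by
  refine Nat.le_of_mul_le_mul_left ?_ t.factorial_pos
  calc t.factorial * ((k + 1 - t) ^ t * n.choose t)
      = (k + 1 - t) ^ t * n.descFactorial t := by
        rw [Nat.descFactorial_eq_factorial_mul_choose]; ring
    _ ≤ k.descFactorial t * n ^ t :=
        Nat.mul_le_mul (Nat.pow_sub_le_descFactorial k t) (Nat.descFactorial_le_pow n t)
    _ = t.factorial * (n ^ t * k.choose t) := by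
        rw [Nat.descFactorial_eq_factorial_mul_choose]; ring

theorem log_choose_div_choose_le {n k t : ℕ} (hk : 0 < k) (hkn : k ≤ n) (ht : 2 * t ≤ k) :
    Real.log (n.choose t / k.choose t) ≤ t * Real.log (2 * n / k) := by
  have hn : (0 : ℝ) < n.choose t := Nat.cast_pos.mpr (Nat.choose_pos (by lia))
  have hkt : (0 : ℝ) < k.choose t := Nat.cast_pos.mpr (Nat.choose_pos (by lia))
  have hpow : k ^ t * n.choose t ≤ (2 * n) ^ t * k.choose t :=
    calc k ^ t * n.choose t
        ≤ (2 * (k + 1 - t)) ^ t * n.choose t := by gcongr; lia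
      _ = 2 ^ t * ((k + 1 - t) ^ t * n.choose t) := by ring
      _ ≤ 2 ^ t * (n ^ t * k.choose t) :=
          Nat.mul_le_mul_left _ (pow_mul_choose_le_pow_mul_choose n k t)
      _ = (2 * n) ^ t * k.choose t := by ring
  rw [← Real.log_pow]
  refine Real.log_le_log (by positivity) ?_
  rw [div_pow, div_le_div_iff₀ hkt (by positivity), mul_comm]
  exact_mod_cast hpow

section SubsetDistribution

variable {ι : Type*} [Fintype ι] {μ ν : Finset ι → ℝ} {k t : ℕ} {α : ℝ} {S : Finset ι} {i : ι}

/-- A probability distribution on the `k`-element subsets of `ι`, encoded as a weight function on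
all finsets that vanishes off the `k`-element ones. -/
structure IsSubsetDistribution (μ : Finset ι → ℝ) (k : ℕ) : Prop where
  nonneg : ∀ S, 0 ≤ μ S
  card_eq : ∀ S, μ S ≠ 0 → #S = k
  sum_eq_one : ∑ S, μ S = 1

theorem IsSubsetDistribution.le_card (hμ : IsSubsetDistribution μ k) : k ≤ Fintype.card ι := by
  obtain ⟨S, -, hS⟩ := exists_ne_zero_of_sum_ne_zero (hμ.sum_eq_one.trans_ne one_ne_zero)
  exact hμ.card_eq S hS ▸ S.card_le_univ

variable [DecidableEq ι]

/-- The probability `P[S ⊆ T]` for `T ∼ μ`. -/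
def inclusionProb (μ : Finset ι → ℝ) (S : Finset ι) : ℝ :=
  ∑ T with S ⊆ T, μ T

/-- The marginal `P[i ∈ T]` for `T ∼ μ`. -/
def marginal (μ : Finset ι → ℝ) (i : ι) : ℝ :=
  ∑ T with i ∈ T, μ T

/-- The distribution `μ_t = μ D_{k→t}` produced by the down operator, meaningful on `t`-element
sets. -/
noncomputable def downDistribution (μ : Finset ι → ℝ) (k t : ℕ) (S : Finset ι) : ℝ :=
  (k.choose t : ℝ)⁻¹ * inclusionProb μ S

/-- The distribution of `T ∼ μ` conditioned on `S ⊆ T`; it is zero if `P[S ⊆ T] = 0`. -/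
noncomputable def condDistribution (μ : Finset ι → ℝ) (S T : Finset ι) : ℝ :=
  if S ⊆ T then μ T / inclusionProb μ S else 0

/-- The conditional marginal distribution `μ_{t+1|S}` of the paper, for `t = #S`; it is a
distribution on `Sᶜ`, although the formula is also nonzero on `S`. -/
noncomputable def condMarginal (μ : Finset ι → ℝ) (k t : ℕ) (S : Finset ι) (i : ι) : ℝ :=
  marginal (condDistribution μ S) i / ((k : ℝ) - t)

/-- `(1/α)`-entropic independence: the down operator to single elements contracts relative entropy
with respect to `μ` by `1 / (α * k)`. Only `ν ≪ μ` is tested, because otherwise `DKL(ν ‖ μ) = ∞`,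
which `discreteKL` does not see. -/
def IsEntropicallyIndependent (μ : Finset ι → ℝ) (k : ℕ) (α : ℝ) : Prop :=
  ∀ ν : Finset ι → ℝ, IsSubsetDistribution ν k → (∀ S, μ S = 0 → ν S = 0) →
    discreteKL univ (fun i => marginal ν i / k) (fun i => marginal μ i / k) ≤
      1 / (α * k) * discreteKL univ ν μ

theorem marginal_condDistribution (μ : Finset ι → ℝ) (S : Finset ι) (i : ι) :
    marginal (condDistribution μ S) i =
      (∑ T with S ⊆ T ∧ i ∈ T, μ T) / inclusionProb μ S := by
  simp only [marginal, condDistribution, ← sum_filter, filter_filter, sum_div, and_comm]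

theorem marginal_condDistribution_of_mem (hS : inclusionProb μ S ≠ 0) (hi : i ∈ S) :
    marginal (condDistribution μ S) i = 1 := by
  have hiff : ∀ T : Finset ι, S ⊆ T ∧ i ∈ T ↔ S ⊆ T :=
    fun T => and_iff_left_of_imp fun hST => hST hi
  simp only [marginal_condDistribution, hiff]
  exact div_self hS

theorem sum_condDistribution (hS : inclusionProb μ S ≠ 0) : ∑ T, condDistribution μ S T = 1 := by
  simp only [condDistribution, ← sum_filter, ← sum_div]
  exact div_self hS

theorem condDistribution_eq_zero {T : Finset ι} (hT : μ T = 0) : condDistribution μ S T = 0 := by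
  simp [condDistribution, hT]

theorem discreteKL_condDistribution (hS : inclusionProb μ S ≠ 0) :
    discreteKL univ (condDistribution μ S) μ = -Real.log (inclusionProb μ S) := by
  rw [← one_mul (-Real.log _), ← sum_condDistribution hS, sum_mul]
  refine sum_congr rfl fun T _ => ?_
  by_cases hμT : μ T = 0
  · simp [condDistribution_eq_zero hμT]
  by_cases hST : S ⊆ T
  · have hratio : condDistribution μ S T / μ T = (inclusionProb μ S)⁻¹ := by
      rw [condDistribution, if_pos hST, div_div_cancel_left' hμT]
    rw [hratio, Real.log_inv]
  · simp [condDistribution, hST]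

namespace IsSubsetDistribution

theorem inclusionProb_nonneg (hμ : IsSubsetDistribution μ k) (S : Finset ι) :
    0 ≤ inclusionProb μ S :=
  sum_nonneg fun T _ => hμ.nonneg T

theorem marginal_nonneg (hμ : IsSubsetDistribution μ k) (i : ι) : 0 ≤ marginal μ i :=
  sum_nonneg fun T _ => hμ.nonneg T

theorem marginal_le_one (hμ : IsSubsetDistribution μ k) (i : ι) : marginal μ i ≤ 1 :=
  hμ.sum_eq_one ▸ sum_le_univ_sum_of_nonneg hμ.nonneg

theorem marginal_eq_zero (hμ : IsSubsetDistribution μ k) (hac : ∀ S, μ S = 0 → ν S = 0)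
    (hi : marginal μ i = 0) : marginal ν i = 0 :=
  sum_eq_zero fun T hT => hac T ((sum_eq_zero_iff_of_nonneg fun T _ => hμ.nonneg T).mp hi T hT)

theorem sum_marginal (hμ : IsSubsetDistribution μ k) : ∑ i, marginal μ i = k := by
  have hT : ∀ T, ∑ i, (if i ∈ T then μ T else 0) = k * μ T := fun T => by
    by_cases h : μ T = 0
    · simp [h]
    · simp [hμ.card_eq T h]
  simp only [marginal, sum_filter]
  rw [sum_comm]
  simp only [hT, ← mul_sum, hμ.sum_eq_one, mul_one]

theorem sum_inclusionProb (hμ : IsSubsetDistribution μ k) (t : ℕ) :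
    ∑ S : Finset ι with #S = t, inclusionProb μ S = k.choose t := by
  have hT : ∀ T, ∑ S : Finset ι with #S = t, (if S ⊆ T then μ T else 0) =
      k.choose t * μ T := fun T => by
    by_cases h : μ T = 0
    · simp [h]
    · have hsubsets : ({S | #S = t ∧ S ⊆ T} : Finset (Finset ι)) = powersetCard t T := by
        ext S
        simp [mem_powersetCard, and_comm]
      rw [← sum_filter, filter_filter, hsubsets, sum_const, card_powersetCard, hμ.card_eq T h,
        nsmul_eq_mul]
  calc ∑ S : Finset ι with #S = t, inclusionProb μ S
      = ∑ S : Finset ι with #S = t, ∑ T, (if S ⊆ T then μ T else 0) :=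
        sum_congr rfl fun S _ => sum_filter _ _
    _ = ∑ T, k.choose t * μ T := by
        rw [sum_comm]
        exact sum_congr rfl fun T _ => hT T
    _ = k.choose t := by rw [← mul_sum, hμ.sum_eq_one, mul_one]

theorem downDistribution_nonneg (hμ : IsSubsetDistribution μ k) (t : ℕ) (S : Finset ι) :
    0 ≤ downDistribution μ k t S :=
  mul_nonneg (by positivity) (hμ.inclusionProb_nonneg S)

theorem sum_downDistribution (hμ : IsSubsetDistribution μ k) (ht : t ≤ k) :
    ∑ S : Finset ι with #S = t, downDistribution μ k t S = 1 := by
  simp only [downDistribution, ← mul_sum, hμ.sum_inclusionProb]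
  exact inv_mul_cancel₀ (Nat.cast_ne_zero.mpr (Nat.choose_pos ht).ne')

theorem sum_downDistribution_mul_neg_log_inclusionProb_le (hμ : IsSubsetDistribution μ k)
    (ht : t ≤ k) :
    ∑ S : Finset ι with #S = t, downDistribution μ k t S * -Real.log (inclusionProb μ S) ≤
      Real.log ((Fintype.card ι).choose t / k.choose t) := by
  have hk : (k.choose t : ℝ) ≠ 0 := Nat.cast_ne_zero.mpr (Nat.choose_pos ht).ne'
  have hn : ((Fintype.card ι).choose t : ℝ) ≠ 0 :=
    Nat.cast_ne_zero.mpr (Nat.choose_pos (ht.trans hμ.le_card)).ne'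
  have hterm : ∀ S, downDistribution μ k t S * -Real.log (inclusionProb μ S) =
      Real.negMulLog (downDistribution μ k t S) -
        downDistribution μ k t S * Real.log (k.choose t) := fun S => by
    by_cases hS : inclusionProb μ S = 0
    · simp [downDistribution, hS]
    · rw [Real.negMulLog, downDistribution, Real.log_mul (inv_ne_zero hk) hS, Real.log_inv]
      ring
  have hentropy := sum_negMulLog_le_log_card (s := ({S | #S = t} : Finset (Finset ι)))
    (fun S _ => hμ.downDistribution_nonneg t S) (hμ.sum_downDistribution ht)
  rw [univ_filter_card_eq, card_powersetCard, card_univ, ← univ_filter_card_eq] at hentropy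
  simp only [hterm, sum_sub_distrib, ← sum_mul, hμ.sum_downDistribution ht, one_mul]
  rw [Real.log_div hn hk]
  exact sub_le_sub_right hentropy _

theorem cond (hμ : IsSubsetDistribution μ k) (hS : inclusionProb μ S ≠ 0) :
    IsSubsetDistribution (condDistribution μ S) k where
  nonneg T := ite_nonneg (div_nonneg (hμ.nonneg T) (hμ.inclusionProb_nonneg S)) le_rfl
  card_eq T hT := hμ.card_eq T (mt condDistribution_eq_zero hT)
  sum_eq_one := sum_condDistribution hS

theorem sum_compl_marginal_condDistribution (hμ : IsSubsetDistribution μ k)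
    (hS : inclusionProb μ S ≠ 0) :
    ∑ i ∈ Sᶜ, marginal (condDistribution μ S) i = (k : ℝ) - #S := by
  have hmem : ∑ i ∈ S, marginal (condDistribution μ S) i = #S := by
    rw [sum_congr rfl fun i hi => marginal_condDistribution_of_mem hS hi]
    simp
  rw [← (hμ.cond hS).sum_marginal, ← sum_add_sum_compl S, hmem, add_sub_cancel_left]

end IsSubsetDistribution

theorem discreteKL_compl_marginal_condDistribution_le (hμ : IsSubsetDistribution μ k)
    (hEI : IsEntropicallyIndependent μ k α) (hS : inclusionProb μ S ≠ 0) :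
    discreteKL Sᶜ (fun i => marginal (condDistribution μ S) i / k) (fun i => marginal μ i / k) ≤
      1 / (α * k) * -Real.log (inclusionProb μ S) :=
  calc discreteKL Sᶜ (fun i => marginal (condDistribution μ S) i / k) (fun i => marginal μ i / k)
      ≤ discreteKL univ (fun i => marginal (condDistribution μ S) i / k)
          (fun i => marginal μ i / k) := by
        refine discreteKL_le_of_subset (subset_univ _)
          (fun i _ _ => div_nonneg (hμ.marginal_nonneg i) k.cast_nonneg) fun i _ hi => ?_
        rw [marginal_condDistribution_of_mem hS (notMem_compl.mp hi)]
        exact div_le_div_of_nonneg_right (hμ.marginal_le_one i) k.cast_nonneg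
    _ ≤ 1 / (α * k) * discreteKL univ (condDistribution μ S) μ :=
        hEI _ (hμ.cond hS) fun _ => condDistribution_eq_zero
    _ = 1 / (α * k) * -Real.log (inclusionProb μ S) := by rw [discreteKL_condDistribution hS]

theorem discreteKL_condMarginal_le (hμ : IsSubsetDistribution μ k)
    (hEI : IsEntropicallyIndependent μ k α) (hSk : #S < k) (hS : inclusionProb μ S ≠ 0) :
    discreteKL Sᶜ (condMarginal μ k #S S) (fun i => marginal μ i / k) ≤
      Real.log (k / (k - #S)) + 1 / (α * (k - #S)) * -Real.log (inclusionProb μ S) := by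
  have hk : (0 : ℝ) < k := Nat.cast_pos.mpr (by lia)
  have hd : (0 : ℝ) < k - #S := sub_pos.mpr (Nat.cast_lt.mpr hSk)
  set c : ℝ := k / (k - #S) with hc
  have hc0 : 0 < c := by positivity
  set r : ι → ℝ := fun i => marginal (condDistribution μ S) i / k with hr
  have hscale : condMarginal μ k #S S = fun i => c * r i := funext fun i => by
    rw [condMarginal, mul_comm, hr, hc, div_mul_div_cancel₀ hk.ne']
  have hsum : c * ∑ i ∈ Sᶜ, r i = 1 := by
    rw [hr, ← sum_div, hμ.sum_compl_marginal_condDistribution hS, hc,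
      div_mul_div_cancel₀ hd.ne', div_self hk.ne']
  calc discreteKL Sᶜ (condMarginal μ k #S S) (fun i => marginal μ i / k)
      = c * discreteKL Sᶜ r (fun i => marginal μ i / k) + c * Real.log c * ∑ i ∈ Sᶜ, r i := by
        rw [hscale]
        refine discreteKL_const_mul hc0.ne' fun i _ hi => ?_
        rw [div_eq_zero_iff, or_iff_left hk.ne'] at hi
        simp only [hr, hμ.marginal_eq_zero (fun _ => condDistribution_eq_zero) hi, zero_div]
    _ = Real.log c + c * discreteKL Sᶜ r (fun i => marginal μ i / k) := by
        rw [mul_right_comm, hsum, one_mul, add_comm]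
    _ ≤ Real.log c + c * (1 / (α * k) * -Real.log (inclusionProb μ S)) := by
        gcongr
        exact discreteKL_compl_marginal_condDistribution_le hμ hEI hS
    _ = Real.log c + 1 / (α * (k - #S)) * -Real.log (inclusionProb μ S) := by
        rw [hc]
        field_simp

theorem sum_downDistribution_mul_discreteKL_condMarginal_le (hμ : IsSubsetDistribution μ k)
    (hEI : IsEntropicallyIndependent μ k α) (hα : 0 < α) (ht : t < k) :
    ∑ S with #S = t, downDistribution μ k t S *
        discreteKL Sᶜ (condMarginal μ k t S) (fun i => marginal μ i / k) ≤
      Real.log (k / (k - t)) +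
        1 / (α * (k - t)) * Real.log ((Fintype.card ι).choose t / k.choose t) := by
  have hd : (0 : ℝ) < k - t := sub_pos.mpr (Nat.cast_lt.mpr ht)
  calc ∑ S with #S = t, downDistribution μ k t S *
        discreteKL Sᶜ (condMarginal μ k t S) (fun i => marginal μ i / k)
      ≤ ∑ S : Finset ι with #S = t, downDistribution μ k t S *
          (Real.log (k / (k - t)) + 1 / (α * (k - t)) * -Real.log (inclusionProb μ S)) := by
        refine sum_le_sum fun S hS => ?_
        obtain rfl : #S = t := (mem_filter.mp hS).2
        by_cases h0 : inclusionProb μ S = 0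
        · simp [downDistribution, h0]
        · exact mul_le_mul_of_nonneg_left (discreteKL_condMarginal_le hμ hEI ht h0)
            (hμ.downDistribution_nonneg _ S)
    _ = Real.log (k / (k - t)) + 1 / (α * (k - t)) *
          ∑ S : Finset ι with #S = t, downDistribution μ k t S * -Real.log (inclusionProb μ S) := by
        simp only [mul_add, sum_add_distrib, ← sum_mul, hμ.sum_downDistribution ht.le, one_mul,
          mul_left_comm _ (1 / (α * ((k : ℝ) - t))), ← mul_sum]
    _ ≤ Real.log (k / (k - t)) +
          1 / (α * (k - t)) * Real.log ((Fintype.card ι).choose t / k.choose t) := by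
        gcongr
        exact hμ.sum_downDistribution_mul_neg_log_inclusionProb_le ht.le

theorem average_cond_marginal_kl_bound_general (hμ : IsSubsetDistribution μ k)
    (hEI : IsEntropicallyIndependent μ k α) (hα : 0 < α) (hk : 0 < k) (ht : 2 * t ≤ k) :
    ∑ S with #S = t, downDistribution μ k t S *
        discreteKL Sᶜ (condMarginal μ k t S) (fun i => marginal μ i / k) ≤
      2 * t / k * (1 / α * Real.log (2 * Fintype.card ι / k) + 1) := by
  have hkR : (0 : ℝ) < k := Nat.cast_pos.mpr hk
  have htR : 2 * (t : ℝ) ≤ k := by exact_mod_cast ht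
  have hd : (0 : ℝ) < k - t := by linarith
  have hkn : (k : ℝ) ≤ Fintype.card ι := Nat.cast_le.mpr hμ.le_card
  have hinv : 1 / ((k : ℝ) - t) ≤ 2 / k := by
    rw [div_le_div_iff₀ hd hkR]
    linarith
  have hlog : Real.log (k / (k - t)) ≤ 2 * t / k :=
    calc Real.log (k / (k - t)) ≤ k / (k - t) - 1 := Real.log_le_sub_one_of_pos (by positivity)
      _ = t * (1 / (k - t)) := by field_simp; ring
      _ ≤ t * (2 / k) := by gcongr
      _ = 2 * t / k := by ring
  have hlog_nonneg : 0 ≤ Real.log (2 * Fintype.card ι / k) :=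
    Real.log_nonneg ((one_le_div hkR).mpr (by linarith))
  calc _ ≤ Real.log (k / (k - t)) +
        1 / (α * (k - t)) * Real.log ((Fintype.card ι).choose t / k.choose t) :=
        sum_downDistribution_mul_discreteKL_condMarginal_le hμ hEI hα (by lia)
    _ ≤ 2 * t / k + 1 / (α * (k - t)) * (t * Real.log (2 * Fintype.card ι / k)) := by
        gcongr
        exact log_choose_div_choose_le hk hμ.le_card ht
    _ = 2 * t / k + 1 / (k - t) * (t * Real.log (2 * Fintype.card ι / k) / α) := by
        field_simp
    _ ≤ 2 * t / k + 2 / k * (t * Real.log (2 * Fintype.card ι / k) / α) := by gcongr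
    _ = 2 * t / k * (1 / α * Real.log (2 * Fintype.card ι / k) + 1) := by ring

end SubsetDistribution

/-- Average KL-divergence bound over conditioning sets, for an
entropically independent distribution:
`∑_S μ_t(S)·DKL(μ_{t+1|S} ‖ p/k) ≤ (2t/k)·((1/α)·log(2n/k) + 1)`. -/
theorem average_cond_marginal_kl_bound (n k : ℕ) (hk : 0 < k) (hkn : k ≤ n)
    (α : ℝ) (hα : α ∈ Set.Ioc (0 : ℝ) 1)
    (μ : Finset (Fin n) → ℝ)
    (hnn : ∀ S, 0 ≤ μ S) (hsupp : ∀ S, μ S ≠ 0 → S.card = k)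
    (hsum : ∑ S, μ S = 1)
    -- μ is (1/α)-entropically independent
    (hEI : ∀ ν : Finset (Fin n) → ℝ, (∀ S, 0 ≤ ν S) → (∀ S, ν S ≠ 0 → S.card = k) →
      (∑ S, ν S = 1) → (∀ S, μ S = 0 → ν S = 0) →
      ∑ i : Fin n,
          ((∑ S ∈ univ.filter (fun S : Finset (Fin n) => i ∈ S), ν S) / k) *
            Real.log (((∑ S ∈ univ.filter (fun S : Finset (Fin n) => i ∈ S), ν S) / k) /
              ((∑ S ∈ univ.filter (fun S : Finset (Fin n) => i ∈ S), μ S) / k)) ≤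
        1 / (α * k) * ∑ S, ν S * Real.log (ν S / μ S))
    (p : Fin n → ℝ)
    (hp : ∀ i, p i = ∑ S ∈ univ.filter (fun S : Finset (Fin n) => i ∈ S), μ S)
    (t : ℕ) (ht1 : 1 ≤ t) (ht2 : 2 * t ≤ k)
    -- conditional marginal distributions μ_{t+1|S}
    (q : Finset (Fin n) → Fin n → ℝ)
    (hq : ∀ S i, q S i =
      (∑ T ∈ univ.filter (fun T : Finset (Fin n) => S ⊆ T ∧ i ∈ T), μ T) /
        (∑ T ∈ univ.filter (fun T : Finset (Fin n) => S ⊆ T), μ T) / ((k : ℝ) - t)) :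
    ∑ S ∈ univ.filter (fun S : Finset (Fin n) => S.card = t),
        ((k.choose t : ℝ))⁻¹ * (∑ T ∈ univ.filter (fun T : Finset (Fin n) => S ⊆ T), μ T) *
          (∑ i ∈ univ \ S, q S i * Real.log ((k : ℝ) * q S i / p i)) ≤
      2 * t / k * (1 / α * Real.log (2 * n / k) + 1) := by
  obtain rfl : p = marginal μ := funext hp
  obtain rfl : q = condMarginal μ k t := funext₂ fun S i =>
    (hq S i).trans (congrArg (· / _) (marginal_condDistribution μ S i).symm)
  have hbound := average_cond_marginal_kl_bound_general ⟨hnn, hsupp, hsum⟩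
    (fun ν hν => hEI ν hν.nonneg hν.card_eq hν.sum_eq_one) hα.1 hk ht2
  simp only [discreteKL, div_div_eq_mul_div, mul_comm _ (k : ℝ), Fintype.card_fin] at hbound
  exact hbound
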